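/- Consider the three-agent system with x_1(0) < x_2(0) < x_3(0), where for t ∈ [2p, 2p+1): ẋ_1 = x_2 − x_1, ẋ_2 = ρ_p(x_1 − x_2), ẋ_3 = 0, and for t ∈ [2p+1, 2p+2): ẋ_1 = 0, ẋ_2 = ρ_p(x_3 − x_2), ẋ_3 = x_2 − x_3. If Σ_{p∈ℕ} ρ_p^{−1} < +∞, then the trajectory does not reach a consensus: x_3(2P) − x_1(2P) is bounded below by a positive constant uniformly in P, so the group diameter does not tend to 0. -/

import Mathlib

/-!
On each unit interval one end agent (agent 1 or 3, value `f`) interacts with the middle agent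
(value `g`) through `f' = g - f`, `g' = r (f - g)`. Here `(g - f) e^{(r+1)t}` and `r f + g` are
constants of motion, so over one unit of time the gap `g - f` is multiplied by
`q = e^{-(r+1)}` and `f` moves by `λ (g - f)` with `λ = (1 - q)/(1 + r)` (`pair_step`).

Chaining two such phases (`period_step`), the order `x₁ < x₂ < x₃` is preserved at the even times,
and `D_p = x₃(2p) - x₁(2p)` satisfies `D_p - 2 ρ_p⁻¹ D_p ≤ D_{p+1} ≤ D_p`. Pick `N` such that
`∑_{p ≥ N} 2 ρ_p⁻¹ ≤ 1/2`. As `D` is non-increasing, summing the one-step losses from `N` on gives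
`D_P ≥ D_N - D_N / 2` for all `P ≥ N`, while `D_P ≥ D_N` for `P ≤ N`; hence `D_N / 2 > 0` is a
uniform lower bound (`exists_lower_bound`).
-/

open MeasureTheory Filter Finset

/-- Weight matrix of the three-agent example: on [2p, 2p+1) agent 1 is attracted to
agent 2 with weight 1 and agent 2 to agent 1 with weight ρ_p; on [2p+1, 2p+2) agent 2
is attracted to agent 3 with weight ρ_p and agent 3 to agent 2 with weight 1.
(Agents 1,2,3 are indexed 0,1,2.) -/
noncomputable def a18 (ρ : ℕ → ℝ) : Fin 3 → Fin 3 → ℝ → ℝ := fun i j t =>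
  if ⌊t⌋₊ % 2 = 0 then
    if i = 0 ∧ j = 1 then 1
    else if i = 1 ∧ j = 0 then ρ (⌊t⌋₊ / 2)
    else 0
  else
    if i = 1 ∧ j = 2 then ρ (⌊t⌋₊ / 2)
    else if i = 2 ∧ j = 1 then 1
    else 0

/-- A trajectory of the three-agent system (Carathéodory integral equation). -/
def IsTrajectory18 (ρ : ℕ → ℝ) (x : ℝ → Fin 3 → ℝ) : Prop :=
  (∀ i : Fin 3, ContinuousOn (fun t => x t i) (Set.Ici (0:ℝ))) ∧
  (∀ i : Fin 3, ∀ t : ℝ, 0 ≤ t →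
    IntervalIntegrable (fun s => ∑ j : Fin 3, a18 ρ i j s * (x s j - x s i))
      MeasureTheory.volume 0 t ∧
    x t i = x 0 i + ∫ s in (0:ℝ)..t, ∑ j : Fin 3, a18 ρ i j s * (x s j - x s i))

/-- λ_p = (1 − e^{−(ρ_p+1)})/(1 + ρ_p). -/
noncomputable def lam18 (ρ : ℕ → ℝ) (p : ℕ) : ℝ :=
  (1 - Real.exp (-(ρ p + 1))) / (1 + ρ p)

/-- Group diameter of the three-agent system. -/
noncomputable def diam18 (x : ℝ → Fin 3 → ℝ) (t : ℝ) : ℝ :=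
  (⨆ i, x t i) - (⨅ i, x t i)

lemma a18_const (ρ : ℕ → ℝ) (i j : Fin 3) (n : ℕ) {t : ℝ}
    (ht : t ∈ Set.Ioo (n : ℝ) (n + 1)) : a18 ρ i j t = a18 ρ i j n := by
  have h : ⌊t⌋₊ = n := (Nat.floor_eq_iff ((Nat.cast_nonneg n).trans ht.1.le)).2 ⟨ht.1.le, ht.2⟩
  simp [a18, h]

/-- Between consecutive integers the weights are constant, so a trajectory is a classical
solution there. -/
lemma IsTrajectory18.hasDerivAt {ρ : ℕ → ℝ} {x : ℝ → Fin 3 → ℝ} (hx : IsTrajectory18 ρ x)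
    (n : ℕ) (i : Fin 3) {t : ℝ} (ht : t ∈ Set.Ioo (n : ℝ) (n + 1)) :
    HasDerivAt (fun s => x s i) (∑ j : Fin 3, a18 ρ i j n * (x t j - x t i)) t := by
  have hn : (0 : ℝ) ≤ n := Nat.cast_nonneg n
  have ht0 : 0 < t := hn.trans_lt ht.1
  set F : ℝ → ℝ := fun s => ∑ j : Fin 3, a18 ρ i j s * (x s j - x s i) with hF
  have hsub : Set.Ioo (n : ℝ) (n + 1) ⊆ Set.Ici 0 := fun s hs => hn.trans hs.1.le
  have hcont : ContinuousOn F (Set.Ioo (n : ℝ) (n + 1)) := by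
    have : ContinuousOn (fun s => ∑ j : Fin 3, a18 ρ i j n * (x s j - x s i))
        (Set.Ioo (n : ℝ) (n + 1)) :=
      continuousOn_finsetSum _ fun j _ =>
        continuousOn_const.mul (((hx.1 j).mono hsub).sub ((hx.1 i).mono hsub))
    refine this.congr fun s hs => ?_
    simp only [hF, a18_const ρ i _ n hs]
  have hFt : F t = ∑ j : Fin 3, a18 ρ i j n * (x t j - x t i) := by
    simp only [hF, a18_const ρ i _ n ht]
  have hd : HasDerivAt (fun u => x 0 i + ∫ s in (0 : ℝ)..u, F s) (F t) t :=
    (intervalIntegral.integral_hasDerivAt_right (hx.2 i t ht0.le).1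
      (hcont.stronglyMeasurableAtFilter isOpen_Ioo t ht)
      (hcont.continuousAt (isOpen_Ioo.mem_nhds ht))).const_add _
  rw [← hFt]
  refine hd.congr_of_eventuallyEq ?_
  filter_upwards [Ioi_mem_nhds ht0] with u hu
  exact (hx.2 i u (le_of_lt hu)).2

lemma eq_of_hasDerivAt_zero {f : ℝ → ℝ} {T : ℝ} (hc : ContinuousOn f (Set.Icc T (T + 1)))
    (hd : ∀ t ∈ Set.Ioo T (T + 1), HasDerivAt f 0 t) : f (T + 1) = f T := by
  obtain ⟨c, -, hc'⟩ := exists_hasDerivAt_eq_slope f (fun _ => 0) (by linarith) hc hd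
  simp only [add_sub_cancel_left, div_one] at hc'
  linarith

/-- Explicit solution after unit time of `f' = g - f`, `g' = r (f - g)`. -/
lemma pair_step {f g : ℝ → ℝ} {T r : ℝ} (hr : 1 ≤ r)
    (hf : ContinuousOn f (Set.Icc T (T + 1))) (hg : ContinuousOn g (Set.Icc T (T + 1)))
    (hf' : ∀ t ∈ Set.Ioo T (T + 1), HasDerivAt f (g t - f t) t)
    (hg' : ∀ t ∈ Set.Ioo T (T + 1), HasDerivAt g (r * (f t - g t)) t) :
    g (T + 1) - f (T + 1) = Real.exp (-(r + 1)) * (g T - f T) ∧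
    f (T + 1) = f T + (1 - Real.exp (-(r + 1))) / (1 + r) * (g T - f T) := by
  have h1 : g (T + 1) - f (T + 1) = Real.exp (-(r + 1)) * (g T - f T) := by
    have key := eq_of_hasDerivAt_zero (T := T)
      (f := fun t => (g t - f t) * Real.exp ((r + 1) * (t - T)))
      ((hg.sub hf).mul (by fun_prop)) (fun t ht => by
        have he : HasDerivAt (fun t => Real.exp ((r + 1) * (t - T)))
            (Real.exp ((r + 1) * (t - T)) * ((r + 1) * 1)) t :=
          (((hasDerivAt_id t).sub_const T).const_mul (r + 1)).exp
        exact (((hg' t ht).sub (hf' t ht)).mul he).congr_deriv (by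
          simp only [Pi.sub_apply]
          ring))
    simp only [add_sub_cancel_left, sub_self, mul_zero, Real.exp_zero, mul_one] at key
    rw [← key, Real.exp_neg]
    field_simp
  have h2 : r * f (T + 1) + g (T + 1) = r * f T + g T :=
    eq_of_hasDerivAt_zero (f := fun t => r * f t + g t)
      ((continuousOn_const.mul hf).add hg) (fun t ht => by
        exact (((hf' t ht).const_mul r).add (hg' t ht)).congr_deriv (by ring))
  refine ⟨h1, ?_⟩
  have hr1 : 1 + r ≠ 0 := by linarith
  field_simp
  linear_combination h2 - h1

/-- One period preserves the strict order of the agents; the distance between the extreme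
agents does not grow and loses at most the fraction `2 ρ_p⁻¹`. -/
lemma period_step {ρ : ℕ → ℝ} (hρ : ∀ p, 1 ≤ ρ p) {x : ℝ → Fin 3 → ℝ}
    (hx : IsTrajectory18 ρ x) (p : ℕ)
    (ha : x (2 * (p : ℝ)) 0 < x (2 * (p : ℝ)) 1) (hb : x (2 * (p : ℝ)) 1 < x (2 * (p : ℝ)) 2) :
    x (2 * (p : ℝ) + 1 + 1) 0 < x (2 * (p : ℝ) + 1 + 1) 1 ∧
    x (2 * (p : ℝ) + 1 + 1) 1 < x (2 * (p : ℝ) + 1 + 1) 2 ∧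
    x (2 * (p : ℝ) + 1 + 1) 2 - x (2 * (p : ℝ) + 1 + 1) 0
      ≤ x (2 * (p : ℝ)) 2 - x (2 * (p : ℝ)) 0 ∧
    x (2 * (p : ℝ)) 2 - x (2 * (p : ℝ)) 0
        - 2 * (ρ p)⁻¹ * (x (2 * (p : ℝ)) 2 - x (2 * (p : ℝ)) 0)
      ≤ x (2 * (p : ℝ) + 1 + 1) 2 - x (2 * (p : ℝ) + 1 + 1) 0 := by
  set T : ℝ := 2 * (p : ℝ) with hT
  have hp : (0 : ℝ) ≤ p := Nat.cast_nonneg p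
  have hc : ∀ (i : Fin 3) (S : ℝ), 0 ≤ S →
      ContinuousOn (fun t => x t i) (Set.Icc S (S + 1)) :=
    fun i S hS => (hx.1 i).mono fun s hs => hS.trans hs.1
  have hT0 : 0 ≤ T := by positivity
  have c1 : ((2 * p : ℕ) : ℝ) = T := by push_cast; rfl
  have c2 : ((2 * p + 1 : ℕ) : ℝ) = T + 1 := by push_cast; rfl
  have d1 := fun i t ht => hx.hasDerivAt (2 * p) i (t := t) ht
  have d2 := fun i t ht => hx.hasDerivAt (2 * p + 1) i (t := t) ht
  have e2 : (2 * p + 1) / 2 = p := by omega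
  have e3 : (2 * p + 1) % 2 = 1 := by omega
  have e0 : 2 * p / 2 = p := by omega
  have e1 : 2 * p % 2 = 0 := by omega
  simp only [a18, Nat.floor_natCast, Fin.sum_univ_three, e0, e1, e2, e3] at d1 d2
  simp only [c1, c2] at d1 d2
  obtain ⟨A1, A2⟩ := pair_step (T := T) (r := ρ p) (hρ p) (hc 0 T hT0) (hc 1 T hT0)
    (fun t ht => by simpa using d1 0 t ht) (fun t ht => by simpa using d1 1 t ht)
  have A3 : x (T + 1) 2 = x T 2 :=
    eq_of_hasDerivAt_zero (hc 2 T hT0) (fun t ht => by simpa using d1 2 t ht)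
  obtain ⟨B1, B2⟩ := pair_step (T := T + 1) (r := ρ p) (hρ p) (hc 2 (T + 1) (by linarith))
    (hc 1 (T + 1) (by linarith))
    (fun t ht => by simpa using d2 2 t ht) (fun t ht => by simpa using d2 1 t ht)
  have B3 : x (T + 1 + 1) 0 = x (T + 1) 0 :=
    eq_of_hasDerivAt_zero (hc 0 (T + 1) (by linarith)) (fun t ht => by simpa using d2 0 t ht)
  have hr := hρ p
  set q := Real.exp (-(ρ p + 1)) with hq
  have hq0 : 0 < q := Real.exp_pos _
  have hq1 : q < 1 := by rw [hq, Real.exp_lt_one_iff]; linarith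
  set l := (1 - q) / (1 + ρ p) with hl
  have hl0 : 0 < l := div_pos (by linarith) (by linarith)
  have hlr : l ≤ (ρ p)⁻¹ := by
    rw [hl, inv_eq_one_div]
    exact div_le_div₀ zero_le_one (by linarith) (by linarith) (by linarith)
  have hmul : l * (1 + ρ p) = 1 - q := div_mul_cancel₀ _ (by linarith)
  -- the gap `x₃ - x₂` at mid-period: it lies in `(0, D_p]`
  have hl1 : q + l ≤ 1 := by linarith [mul_pos hl0 (zero_lt_one.trans_le hr)]
  have hqa : 0 < q * (x T 1 - x T 0) := mul_pos hq0 (by linarith)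
  have hla : 0 < l * (x T 1 - x T 0) := mul_pos hl0 (by linarith)
  have hqla : 0 ≤ (1 - q - l) * (x T 1 - x T 0) := mul_nonneg (by linarith) (by linarith)
  have hb' : 0 < x (T + 1) 2 - x (T + 1) 1 := by linarith
  have hbD : x (T + 1) 2 - x (T + 1) 1 ≤ x T 2 - x T 0 := by linarith
  have hD : 0 < x T 2 - x T 0 := by linarith
  have hloss1 : l * (x T 1 - x T 0) ≤ (ρ p)⁻¹ * (x T 2 - x T 0) :=
    mul_le_mul hlr (by linarith) (by linarith) (hl0.le.trans hlr)
  have hloss2 : l * (x (T + 1) 2 - x (T + 1) 1) ≤ (ρ p)⁻¹ * (x T 2 - x T 0) :=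
    mul_le_mul hlr hbD hb'.le (hl0.le.trans hlr)
  have hp2 : 0 < l * (x (T + 1) 2 - x (T + 1) 1) := mul_pos hl0 hb'
  have hgap0 : 0 < x (T + 1) 1 - x (T + 1) 0 := by rw [A1]; exact mul_pos hq0 (by linarith)
  have hgap2 : 0 < q * (x (T + 1) 2 - x (T + 1) 1) := mul_pos hq0 hb'
  have hgap4 : 0 ≤ (1 - q - l) * (x (T + 1) 2 - x (T + 1) 1) :=
    mul_nonneg (by linarith) hb'.le
  refine ⟨?_, ?_, ?_, ?_⟩ <;> linarith

/-- A positive sequence that is non-increasing and loses at step `p` at most a fraction `c p`,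
with `c` summable, is bounded below by a positive constant. -/
lemma exists_lower_bound {D c : ℕ → ℝ} (hD : ∀ p, 0 < D p) (hanti : ∀ p, D (p + 1) ≤ D p)
    (hc : ∀ p, 0 ≤ c p) (hsum : Summable c) (hstep : ∀ p, D p - c p * D p ≤ D (p + 1)) :
    ∃ ε : ℝ, 0 < ε ∧ ∀ P, ε ≤ D P := by
  have hA : Antitone D := antitone_nat_of_succ_le hanti
  obtain ⟨N, hN⟩ : ∃ N, ∑' k, c (k + N) < 1 / 2 :=
    ((tendsto_sum_nat_add c).eventually_lt_const (by norm_num)).exists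
  have hsN : Summable fun k => c (k + N) := (summable_nat_add_iff N).2 hsum
  have key : ∀ k, D N - (∑ m ∈ range k, c (m + N)) * D N ≤ D (k + N) := by
    intro k
    induction k with
    | zero => simp
    | succ k ih =>
      have h1 := hstep (k + N)
      have h2 : c (k + N) * D (k + N) ≤ c (k + N) * D N :=
        mul_le_mul_of_nonneg_left (hA (Nat.le_add_left _ _)) (hc _)
      rw [sum_range_succ, show k + 1 + N = k + N + 1 by ring]
      linarith
  refine ⟨D N / 2, half_pos (hD N), fun P => ?_⟩
  have hDN := hD N
  rcases le_total N P with h | h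
  · have h1 := key (P - N)
    rw [Nat.sub_add_cancel h] at h1
    have h2 := hsN.sum_le_tsum (range (P - N)) (fun _ _ => hc _)
    nlinarith
  · linarith [hA h]

/-- for the three-agent example, if Σ_p ρ_p⁻¹ < ∞ then the trajectory does
not reach a consensus: x₃(2P) − x₁(2P) is uniformly bounded below by a positive constant,
the group diameter does not tend to 0, and no common limit exists. -/
theorem stmt19 (ρ : ℕ → ℝ) (hmono : Monotone ρ) (hρ : ∀ p, 1 ≤ ρ p)
    (x : ℝ → Fin 3 → ℝ) (hx : IsTrajectory18 ρ x)
    (h01 : x 0 0 < x 0 1) (h12 : x 0 1 < x 0 2)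
    (hsum : Summable fun p => (ρ p)⁻¹) :
    (∃ ε : ℝ, 0 < ε ∧ ∀ P : ℕ, ε ≤ x (2*(P:ℝ)) 2 - x (2*(P:ℝ)) 0) ∧
    ¬ Tendsto (diam18 x) atTop (nhds 0) ∧
    ¬ ∃ c : ℝ, ∀ i : Fin 3, Tendsto (fun t => x t i) atTop (nhds c) := by
  have hcast : ∀ p : ℕ, 2 * ((p + 1 : ℕ) : ℝ) = 2 * (p : ℝ) + 1 + 1 := by
    intro p; push_cast; ring
  have hord : ∀ p : ℕ, x (2 * (p : ℝ)) 0 < x (2 * (p : ℝ)) 1 ∧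
      x (2 * (p : ℝ)) 1 < x (2 * (p : ℝ)) 2 := by
    intro p
    induction p with
    | zero => simpa using ⟨h01, h12⟩
    | succ p ih =>
      obtain ⟨h1, h2, -, -⟩ := period_step hρ hx p ih.1 ih.2
      rw [hcast]
      exact ⟨h1, h2⟩
  have hstep := fun p => period_step hρ hx p (hord p).1 (hord p).2
  obtain ⟨ε, hε, hlow⟩ := exists_lower_bound
    (D := fun p : ℕ => x (2 * (p : ℝ)) 2 - x (2 * (p : ℝ)) 0) (c := fun p => 2 * (ρ p)⁻¹)
    (fun p => by linarith [(hord p).1, (hord p).2])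
    (fun p => by simp only [hcast]; exact (hstep p).2.2.1)
    (fun p => mul_nonneg zero_le_two (inv_nonneg.2 (zero_le_one.trans (hρ p))))
    (hsum.mul_left 2)
    (fun p => by simp only [hcast]; exact (hstep p).2.2.2)
  have htend : Tendsto (fun P : ℕ => 2 * (P : ℝ)) atTop atTop :=
    tendsto_natCast_atTop_atTop.const_mul_atTop two_pos
  refine ⟨⟨ε, hε, hlow⟩, fun h => ?_, ?_⟩
  · have h1 : ε ≤ 0 := ge_of_tendsto' (h.comp htend) fun P => by
      have hsup : x (2 * (P : ℝ)) 2 ≤ ⨆ i, x (2 * (P : ℝ)) i :=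
        le_ciSup (Set.finite_range _).bddAbove 2
      have hinf : (⨅ i, x (2 * (P : ℝ)) i) ≤ x (2 * (P : ℝ)) 0 :=
        ciInf_le (Set.finite_range _).bddBelow 0
      have := hlow P
      simp only [Function.comp_apply, diam18]
      linarith
    linarith
  · rintro ⟨c, hc⟩
    have h1 : ε ≤ c - c := ge_of_tendsto' (((hc 2).sub (hc 0)).comp htend) hlow
    linarith
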